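/- arXiv:1603.00780 — 3 statements merged into one kernel-verified Lean document; each statement's English description precedes it below -/
import Mathlib

section
/- Let k be a field with char(k) ≠ 2 and char(k) ≠ 3, and let L be a finite-dimensional 5-graded Lie algebra over k that is algebraic. Then for every commutative associative unital k-algebra R, the base change L ⊗_k R (a 5-graded Lie algebra over R with graded components L_i ⊗_k R) is again algebraic: for every σ ∈ {1,−1} and all x ∈ L_σ ⊗_k R, s ∈ L_{2σ} ⊗_k R, the endomorphism e_σ(x,s) = Σ_{i=0}^{4} (1/i!)·(ad(x+s))^i of L ⊗_k R is an R-Lie algebra automorphism. -/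
/-!
Let `v` have degree `σ` or `2σ` and put `D = ad v`. Since `D ^ 5 = 0`, the map `e(v)` preserves the
bracket exactly when the terms of total degree at least five in `⁅e(v) a, e(v) b⁆` cancel. By
degree reasons only those of degree five and six survive; the degree-six part is a multiple of
`D` applied to the degree-five part `T(v, a, b)`, so the condition is just `T(v, a, b) = 0`.
(Leibniz' rule for `D ^ 5` gives `5 • T(v, a, b) = 0`, so this is a condition in characteristic
five only.)

Now `T(v, a, b)` is a form of degree five in `v`. A homogeneous polynomial of degree five that
vanishes at all points over a domain with at least five elements is zero, and the invertibility of
`2` and `3` makes `0, 1, 2, 3, 4` distinct. Hence `T` vanishes on the generic element of `L_σ`,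
and by specialization on `L_σ ⊗ R`. Finally `e(x + s) = e(x) e(s)`, and `T(s, a, b) = 0` by degree
reasons.
-/

open TensorProduct

/-- The exponential-type endomorphism `e(v) := Σ_{i=0}^{4} (1/i!)·(ad v)^i` of a Lie
algebra over a commutative ring in which `2` and `3` are invertible. -/
noncomputable def eMap (R : Type*) {L : Type*} [CommRing R] [LieRing L] [LieAlgebra R L]
    [Invertible (2 : R)] [Invertible (3 : R)] (v : L) : Module.End R L :=
  1 + (LieAlgebra.ad R L v) + ⅟(2:R) • (LieAlgebra.ad R L v) ^ 2
    + (⅟(2:R) * ⅟(3:R)) • (LieAlgebra.ad R L v) ^ 3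
    + (⅟(2:R) * ⅟(2:R) * ⅟(2:R) * ⅟(3:R)) • (LieAlgebra.ad R L v) ^ 4

section Exponential

variable {R L : Type*} [CommRing R] [LieRing L] [LieAlgebra R L]

/-- The component of degree five in `v` of `⁅e(v) a, e(v) b⁆`, multiplied by `24` so that it makes
sense over `ℤ`. Its vanishing is the condition for `e(v)` to preserve `⁅a, b⁆`. -/
def quinticDefect (v a b : L) : L :=
  ⁅⁅v, a⁆, ⁅v, ⁅v, ⁅v, ⁅v, b⁆⁆⁆⁆⁆ + 2 • ⁅⁅v, ⁅v, a⁆⁆, ⁅v, ⁅v, ⁅v, b⁆⁆⁆⁆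
    + 2 • ⁅⁅v, ⁅v, ⁅v, a⁆⁆⁆, ⁅v, ⁅v, b⁆⁆⁆ + ⁅⁅v, ⁅v, ⁅v, ⁅v, a⁆⁆⁆⁆, ⁅v, b⁆⁆

theorem quinticDefect_add_left (v a a' b : L) :
    quinticDefect v (a + a') b = quinticDefect v a b + quinticDefect v a' b := by
  simp only [quinticDefect, lie_add, add_lie, smul_add]
  abel

theorem quinticDefect_add_right (v a b b' : L) :
    quinticDefect v a (b + b') = quinticDefect v a b + quinticDefect v a b' := by
  simp only [quinticDefect, lie_add, smul_add]
  abel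

theorem quinticDefect_smul_smul (r s : R) (v a b : L) :
    quinticDefect v (r • a) (s • b) = (r * s) • quinticDefect v a b := by
  simp only [quinticDefect, lie_smul, smul_lie]
  module

theorem map_quinticDefect {L' : Type*} [LieRing L'] [LieAlgebra R L'] (f : L →ₗ⁅R⁆ L')
    (v a b : L) : f (quinticDefect v a b) = quinticDefect (f v) (f a) (f b) := by
  simp only [quinticDefect, map_add, map_nsmul, LieHom.map_lie]

theorem lie_quinticDefect {v : L} (h5 : LieAlgebra.ad R L v ^ 5 = 0) (a b : L) :
    ⁅v, quinticDefect v a b⁆ = 3 • ⁅⁅v, ⁅v, a⁆⁆, ⁅v, ⁅v, ⁅v, ⁅v, b⁆⁆⁆⁆⁆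
      + 4 • ⁅⁅v, ⁅v, ⁅v, a⁆⁆⁆, ⁅v, ⁅v, ⁅v, b⁆⁆⁆⁆
      + 3 • ⁅⁅v, ⁅v, ⁅v, ⁅v, a⁆⁆⁆⁆, ⁅v, ⁅v, b⁆⁆⁆ := by
  have h5' (c : L) : ⁅v, ⁅v, ⁅v, ⁅v, ⁅v, c⁆⁆⁆⁆⁆ = 0 := by
    simpa [pow_succ] using congr($h5 c)
  simp only [quinticDefect, lie_add, lie_nsmul, leibniz_lie v ⁅v, _⁆, h5', zero_lie, lie_zero]
  module

theorem quinticDefect_eq_zero_of_ad_pow_three_eq_zero {v : L}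
    (h3 : LieAlgebra.ad R L v ^ 3 = 0) (a b : L) : quinticDefect v a b = 0 := by
  have h3' (c : L) : ⁅v, ⁅v, ⁅v, c⁆⁆⁆ = 0 := by
    simpa [pow_succ] using congr($h3 c)
  simp [quinticDefect, h3']

variable [Invertible (2 : R)] [Invertible (3 : R)]

theorem eMap_apply (v a : L) :
    eMap R v a = a + ⁅v, a⁆ + ⅟(2 : R) • ⁅v, ⁅v, a⁆⁆
      + (⅟(2 : R) * ⅟(3 : R)) • ⁅v, ⁅v, ⁅v, a⁆⁆⁆
      + (⅟(2 : R) * ⅟(2 : R) * ⅟(2 : R) * ⅟(3 : R)) • ⁅v, ⁅v, ⁅v, ⁅v, a⁆⁆⁆⁆ := by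
  simp [eMap, pow_succ]

theorem isUnit_eMap {v : L} (hv : IsNilpotent (LieAlgebra.ad R L v)) : IsUnit (eMap R v) := by
  let D := LieAlgebra.ad R L v
  let q : Module.End R L := 1 + ⅟(2 : R) • D + (⅟(2 : R) * ⅟(3 : R)) • D ^ 2
    + (⅟(2 : R) * ⅟(2 : R) * ⅟(2 : R) * ⅟(3 : R)) • D ^ 3
  have hq : eMap R v = 1 + D * q := by
    simp only [eMap, D, q, mul_add, mul_one, mul_smul_comm, pow_succ', pow_zero]
    abel
  have hcomm : Commute D q := by
    refine ((((Commute.one_right D).add_right ?_).add_right ?_).add_right ?_)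
    all_goals exact Commute.smul_right (by simp) _
  exact hq ▸ (hcomm.isNilpotent_mul_right hv).isUnit_one_add

theorem eMap_add {x s : L} (hxs : ⁅x, s⁆ = 0) (hs : LieAlgebra.ad R L s ^ 3 = 0)
    (hxss : LieAlgebra.ad R L x * LieAlgebra.ad R L s ^ 2 = 0)
    (hxxxs : LieAlgebra.ad R L x ^ 3 * LieAlgebra.ad R L s = 0) :
    eMap R (x + s) = eMap R x * eMap R s := by
  have lie_comm (a : L) : ⁅s, ⁅x, a⁆⁆ = ⁅x, ⁅s, a⁆⁆ := by
    rw [leibniz_lie, ← lie_skew s x, hxs, neg_zero, zero_lie, zero_add]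
  have hs' (a : L) : ⁅s, ⁅s, ⁅s, a⁆⁆⁆ = 0 := by
    simpa [pow_succ] using congr($hs a)
  have hxss' (a : L) : ⁅x, ⁅s, ⁅s, a⁆⁆⁆ = 0 := by
    simpa [pow_succ] using congr($hxss a)
  have hxxxs' (a : L) : ⁅x, ⁅x, ⁅x, ⁅s, a⁆⁆⁆⁆ = 0 := by
    simpa [pow_succ] using congr($hxxxs a)
  have h2 : (2 : R) * ⅟(2 : R) = 1 := mul_invOf_self _
  have h3 : (3 : R) * ⅟(3 : R) = 1 := mul_invOf_self _
  ext a
  simp only [Module.End.mul_apply, eMap_apply, lie_add, add_lie, lie_smul, lie_comm, hs', hxss',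
    hxxxs', lie_zero, smul_zero, add_zero]
  match_scalars <;> grind

theorem lie_eMap_eMap {v : L} (h5 : LieAlgebra.ad R L v ^ 5 = 0)
    (h34 : ∀ a b, ⁅(LieAlgebra.ad R L v ^ 3) a, (LieAlgebra.ad R L v ^ 4) b⁆ = 0) (a b : L) :
    ⁅eMap R v a, eMap R v b⁆ = eMap R v ⁅a, b⁆ +
      (⅟(2 : R) * ⅟(2 : R) * ⅟(2 : R) * ⅟(3 : R)) •
        (1 + (⅟(2 : R) * ⅟(3 : R)) • LieAlgebra.ad R L v) (quinticDefect v a b) := by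
  have h34' (c d : L) : ⁅⁅v, ⁅v, ⁅v, c⁆⁆⁆, ⁅v, ⁅v, ⁅v, ⁅v, d⁆⁆⁆⁆⁆ = 0 := by
    simpa [pow_succ] using h34 c d
  have h43' (c d : L) : ⁅⁅v, ⁅v, ⁅v, ⁅v, c⁆⁆⁆⁆, ⁅v, ⁅v, ⁅v, d⁆⁆⁆⁆ = 0 := by
    rw [← lie_skew, h34', neg_zero]
  have h2 : (2 : R) * ⅟(2 : R) = 1 := mul_invOf_self _
  have h3 : (3 : R) * ⅟(3 : R) = 1 := mul_invOf_self _
  simp only [LinearMap.add_apply, Module.End.one_apply, LinearMap.smul_apply, LieAlgebra.ad_apply,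
    lie_quinticDefect h5]
  simp only [eMap_apply, quinticDefect, leibniz_lie v a, leibniz_lie v ⁅_, _⁆, lie_add, add_lie,
    lie_smul, smul_lie, h34', h43', smul_zero]
  match_scalars <;> grind

theorem eMap_lie_iff {v : L} (h5 : LieAlgebra.ad R L v ^ 5 = 0)
    (h34 : ∀ a b, ⁅(LieAlgebra.ad R L v ^ 3) a, (LieAlgebra.ad R L v ^ 4) b⁆ = 0) (a b : L) :
    eMap R v ⁅a, b⁆ = ⁅eMap R v a, eMap R v b⁆ ↔ quinticDefect v a b = 0 := by
  have hnil : IsNilpotent (LieAlgebra.ad R L v) := ⟨5, h5⟩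
  have hunit : IsUnit (1 + (⅟(2 : R) * ⅟(3 : R)) • LieAlgebra.ad R L v) :=
    (hnil.smul _).isUnit_one_add
  have hinj := ((Module.End.isUnit_iff _).mp hunit).injective
  have h2 : IsUnit (⅟(2 : R)) := isUnit_of_invertible _
  have h3 : IsUnit (⅟(3 : R)) := isUnit_of_invertible _
  rw [lie_eMap_eMap h5 h34, left_eq_add, (((h2.mul h2).mul h2).mul h3).smul_eq_zero,
    map_eq_zero_iff _ hinj]

end Exponential

section FiveGraded

section HomogeneousEnd

variable {ι R M : Type*} [AddMonoid ι] [CommRing R] [AddCommGroup M] [Module R M]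

/-- The endomorphisms of a graded module that are homogeneous of degree `d`. -/
def homogeneousEnd (G : ι → Submodule R M) (d : ι) : Submodule R (Module.End R M) where
  carrier := {f | ∀ i, ∀ a ∈ G i, f a ∈ G (d + i)}
  zero_mem' _ _ _ := zero_mem _
  add_mem' hf hg i a ha := add_mem (hf i a ha) (hg i a ha)
  smul_mem' c _ hf i a ha := Submodule.smul_mem _ c (hf i a ha)

instance homogeneousEnd.gradedMonoid (G : ι → Submodule R M) :
    SetLike.GradedMonoid (homogeneousEnd G) where
  one_mem i a ha := by rwa [Module.End.one_apply, zero_add]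
  mul_mem d e f g hf hg i a ha := by
    rw [add_assoc]
    exact hf _ _ (hg i a ha)

end HomogeneousEnd

variable {R L : Type*} [CommRing R] [LieRing L] [LieAlgebra R L] {G : ℤ → Submodule R L}

theorem ad_mem_homogeneousEnd [SetLike.GradedBracket G] {d : ℤ} {x : L} (hx : x ∈ G d) :
    LieAlgebra.ad R L x ∈ homogeneousEnd G d :=
  fun _ _ ha => SetLike.GradedBracket.bracket_mem hx ha

theorem eq_zero_of_mem_homogeneousEnd [DirectSum.Decomposition G]
    (hG : ∀ i, 2 < |i| → G i = ⊥) {d : ℤ} (hd : 5 ≤ |d|) {f : Module.End R L}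
    (hf : f ∈ homogeneousEnd G d) : f = 0 := by
  ext a
  induction a using DirectSum.Decomposition.inductionOn G with
  | zero => simp
  | add a b ha hb => simp_all
  | @homogeneous i a =>
    by_cases hi : 2 < |i|
    · have ha : (a : L) ∈ (⊥ : Submodule R L) := hG i hi ▸ a.2
      simp [(Submodule.mem_bot R).mp ha]
    · have hdi : 2 < |d + i| := by grind
      exact (Submodule.mem_bot R).mp (hG _ hdi ▸ hf i a a.2)

variable [GradedLieAlgebra G]

theorem lie_apply_apply_eq_zero (hG : ∀ i, 2 < |i| → G i = ⊥) {d e : ℤ} (hde : 7 ≤ |d + e|)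
    {f g : Module.End R L} (hf : f ∈ homogeneousEnd G d) (hg : g ∈ homogeneousEnd G e)
    (a b : L) : ⁅f a, g b⁆ = 0 := by
  induction a using DirectSum.Decomposition.inductionOn G with
  | zero => simp
  | add a a' ha ha' => simp_all
  | @homogeneous i a =>
    by_cases hi : 2 < |i|
    · have ha : (a : L) ∈ (⊥ : Submodule R L) := hG i hi ▸ a.2
      simp [(Submodule.mem_bot R).mp ha]
    · have hdeg : 5 ≤ |d + i + e| := by grind
      have hzero : LieAlgebra.ad R L (f a) * g = 0 := eq_zero_of_mem_homogeneousEnd hG hdeg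
        (SetLike.mul_mem_graded (ad_mem_homogeneousEnd (hf i a a.2)) hg)
      exact congr($hzero b)

theorem ad_pow_five_eq_zero (hG : ∀ i, 2 < |i| → G i = ⊥) {σ : ℤ} (hσ : σ ≠ 0) {x : L}
    (hx : x ∈ G σ) : LieAlgebra.ad R L x ^ 5 = 0 :=
  eq_zero_of_mem_homogeneousEnd hG (by grind)
    (SetLike.pow_mem_graded 5 (ad_mem_homogeneousEnd hx))

theorem lie_ad_pow_three_ad_pow_four_eq_zero (hG : ∀ i, 2 < |i| → G i = ⊥) {σ : ℤ} (hσ : σ ≠ 0)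
    {x : L} (hx : x ∈ G σ) (a b : L) :
    ⁅(LieAlgebra.ad R L x ^ 3) a, (LieAlgebra.ad R L x ^ 4) b⁆ = 0 :=
  lie_apply_apply_eq_zero hG (by grind) (SetLike.pow_mem_graded 3 (ad_mem_homogeneousEnd hx))
    (SetLike.pow_mem_graded 4 (ad_mem_homogeneousEnd hx)) a b

theorem ad_pow_three_eq_zero (hG : ∀ i, 2 < |i| → G i = ⊥) {σ : ℤ} (hσ : σ ≠ 0) {s : L}
    (hs : s ∈ G (2 * σ)) : LieAlgebra.ad R L s ^ 3 = 0 :=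
  eq_zero_of_mem_homogeneousEnd hG (by grind)
    (SetLike.pow_mem_graded 3 (ad_mem_homogeneousEnd hs))

variable [Invertible (2 : R)] [Invertible (3 : R)]

theorem eMap_add_of_mem (hG : ∀ i, 2 < |i| → G i = ⊥) {σ : ℤ} (hσ : σ ≠ 0) {x s : L}
    (hx : x ∈ G σ) (hs : s ∈ G (2 * σ)) : eMap R (x + s) = eMap R x * eMap R s := by
  have hX := ad_mem_homogeneousEnd hx
  have hS := ad_mem_homogeneousEnd hs
  have hxs : ⁅x, s⁆ = 0 := by
    have h3σ : 2 < |σ + 2 * σ| := by grind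
    exact (Submodule.mem_bot R).mp (hG _ h3σ ▸ SetLike.GradedBracket.bracket_mem hx hs)
  refine eMap_add hxs (ad_pow_three_eq_zero hG hσ hs) ?_ ?_
  · exact eq_zero_of_mem_homogeneousEnd hG (by grind)
      (SetLike.mul_mem_graded hX (SetLike.pow_mem_graded 2 hS))
  · exact eq_zero_of_mem_homogeneousEnd hG (by grind)
      (SetLike.mul_mem_graded (SetLike.pow_mem_graded 3 hX) hS)

theorem eMap_add_bijective (hG : ∀ i, 2 < |i| → G i = ⊥) {σ : ℤ} (hσ : σ ≠ 0) {x s : L}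
    (hx : x ∈ G σ) (hs : s ∈ G (2 * σ)) : Function.Bijective (eMap R (x + s)) := by
  rw [← Module.End.isUnit_iff, eMap_add_of_mem hG hσ hx hs]
  exact (isUnit_eMap ⟨5, ad_pow_five_eq_zero hG hσ hx⟩).mul
    (isUnit_eMap ⟨3, ad_pow_three_eq_zero hG hσ hs⟩)

theorem eMap_lie_of_mem_iff (hG : ∀ i, 2 < |i| → G i = ⊥) {σ : ℤ} (hσ : σ ≠ 0) {x : L}
    (hx : x ∈ G σ) (a b : L) :
    eMap R x ⁅a, b⁆ = ⁅eMap R x a, eMap R x b⁆ ↔ quinticDefect x a b = 0 :=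
  eMap_lie_iff (ad_pow_five_eq_zero hG hσ hx) (lie_ad_pow_three_ad_pow_four_eq_zero hG hσ hx) a b

theorem eMap_add_lie (hG : ∀ i, 2 < |i| → G i = ⊥) {σ : ℤ} (hσ : σ ≠ 0) {x s : L}
    (hx : x ∈ G σ) (hs : s ∈ G (2 * σ)) (hdefect : ∀ a b, quinticDefect x a b = 0) (a b : L) :
    eMap R (x + s) ⁅a, b⁆ = ⁅eMap R (x + s) a, eMap R (x + s) b⁆ := by
  have hs_lie : eMap R s ⁅a, b⁆ = ⁅eMap R s a, eMap R s b⁆ :=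
    (eMap_lie_of_mem_iff hG (mul_ne_zero two_ne_zero hσ) hs a b).mpr
      (quinticDefect_eq_zero_of_ad_pow_three_eq_zero (ad_pow_three_eq_zero hG hσ hs) a b)
  rw [eMap_add_of_mem hG hσ hx hs]
  simp only [Module.End.mul_apply]
  rw [hs_lie, (eMap_lie_of_mem_iff hG hσ hx _ _).mpr (hdefect _ _)]

end FiveGraded

section GradedTensor

variable {k L A : Type*} [CommRing k] [LieRing L] [LieAlgebra k L] [CommRing A] [Algebra k A]

open DirectSum (decomposeTensor)

instance gradedBracket_decomposeTensor {ι : Type*} [AddMonoid ι] (𝒜 : ι → Submodule k A)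
    [SetLike.GradedMonoid 𝒜] : SetLike.GradedBracket (decomposeTensor 𝒜 L) where
  bracket_mem := by
    rintro i j _ _ ⟨x, rfl⟩ ⟨y, rfl⟩
    induction x with
    | zero => simp
    | add x x' hx hx' =>
      rw [map_add, add_lie]
      exact add_mem hx hx'
    | tmul p a =>
      induction y with
      | zero => simp
      | add y y' hy hy' =>
        rw [map_add, lie_add]
        exact add_mem hy hy'
      | tmul q b => exact ⟨⟨p * q, SetLike.mul_mem_graded p.2 q.2⟩ ⊗ₜ ⁅a, b⁆, rfl⟩

theorem tmul_mem_decomposeTensor {ι M : Type*} [AddCommGroup M] [Module k M]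
    {𝒜 : ι → Submodule k A} {i : ι} {p : A} (hp : p ∈ 𝒜 i) (m : M) :
    p ⊗ₜ[k] m ∈ decomposeTensor 𝒜 M i :=
  ⟨⟨p, hp⟩ ⊗ₜ m, rfl⟩

instance gradedBracket_baseChange {ι : Type*} [Add ι] (G : ι → Submodule k L)
    [SetLike.GradedBracket G] : SetLike.GradedBracket fun i => (G i).baseChange A where
  bracket_mem := by
    rintro i j _ _ ⟨x, rfl⟩ ⟨y, rfl⟩
    induction x with
    | zero => simp
    | add x x' hx hx' =>
      rw [map_add, add_lie]
      exact add_mem hx hx'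
    | tmul p a =>
      induction y with
      | zero => simp
      | add y y' hy hy' =>
        rw [map_add, lie_add]
        exact add_mem hy hy'
      | tmul q b =>
        exact Submodule.tmul_mem_baseChange_of_mem (p * q)
          (SetLike.GradedBracket.bracket_mem a.2 b.2)

noncomputable instance gradedLieAlgebra_baseChange {ι : Type*} [DecidableEq ι] [AddCommMonoid ι]
    (G : ι → Submodule k L) [GradedLieAlgebra G] :
    GradedLieAlgebra fun i => (G i).baseChange A where

theorem quinticDefect_mem {ℒ : ℕ → Submodule k L} [SetLike.GradedBracket ℒ] {v a b : L}
    (hv : v ∈ ℒ 1) (ha : a ∈ ℒ 0) (hb : b ∈ ℒ 0) : quinticDefect v a b ∈ ℒ 5 := by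
  have lie_mem {d e : ℕ} {x y : L} (hx : x ∈ ℒ d) (hy : y ∈ ℒ e) : ⁅x, y⁆ ∈ ℒ (d + e) :=
    SetLike.GradedBracket.bracket_mem hx hy
  have ha₁ : ⁅v, a⁆ ∈ ℒ 1 := lie_mem hv ha
  have ha₂ : ⁅v, ⁅v, a⁆⁆ ∈ ℒ 2 := lie_mem hv ha₁
  have ha₃ : ⁅v, ⁅v, ⁅v, a⁆⁆⁆ ∈ ℒ 3 := lie_mem hv ha₂
  have ha₄ : ⁅v, ⁅v, ⁅v, ⁅v, a⁆⁆⁆⁆ ∈ ℒ 4 := lie_mem hv ha₃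
  have hb₁ : ⁅v, b⁆ ∈ ℒ 1 := lie_mem hv hb
  have hb₂ : ⁅v, ⁅v, b⁆⁆ ∈ ℒ 2 := lie_mem hv hb₁
  have hb₃ : ⁅v, ⁅v, ⁅v, b⁆⁆⁆ ∈ ℒ 3 := lie_mem hv hb₂
  have hb₄ : ⁅v, ⁅v, ⁅v, ⁅v, b⁆⁆⁆⁆ ∈ ℒ 4 := lie_mem hv hb₃
  exact add_mem (add_mem (add_mem (lie_mem ha₁ hb₄) (nsmul_mem (lie_mem ha₂ hb₃) 2))
    (nsmul_mem (lie_mem ha₃ hb₂) 2)) (lie_mem ha₄ hb₁)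

end GradedTensor

section GenericElement

open MvPolynomial Cardinal TensorProduct
open DirectSum (decomposeTensor)

theorem five_le_mk_of_invertible (k : Type*) [CommRing k] [Nontrivial k] [Invertible (2 : k)]
    [Invertible (3 : k)] : 5 ≤ #k := by
  have h2 : IsUnit (2 : k) := isUnit_of_invertible 2
  have h3 : IsUnit (3 : k) := isUnit_of_invertible 3
  have h4 : IsUnit (4 : k) := by
    convert h2.mul h2
    norm_num
  have cast_ne_zero (d : ℕ) (hd : 0 < d) (hd5 : d < 5) : (d : k) ≠ 0 := by
    interval_cases d
    exacts [by simp, h2.ne_zero, h3.ne_zero, h4.ne_zero]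
  have hinj : Function.Injective fun i : Fin 5 => ((i : ℕ) : k) := by
    refine Function.Injective.of_lt_imp_ne fun i j hij h => ?_
    refine cast_ne_zero (j - i) (by lia) (by lia) ?_
    rw [Nat.cast_sub hij.le, ← h, sub_self]
  simpa using lift_mk_le_lift_mk_of_injective hinj

variable {k : Type*} [CommRing k]

theorem eq_zero_of_forall_rTensor_aeval_eq_zero [IsDomain k] {ι M : Type*} [AddCommGroup M]
    [Module k M] [Module.Free k M] {n : ℕ} (hn : n ≤ #k) {u : MvPolynomial ι k ⊗[k] M}
    (hu : u ∈ decomposeTensor (homogeneousSubmodule ι k) M n)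
    (h : ∀ t : ι → k, (aeval (R := k) t).toLinearMap.rTensor M u = 0) : u = 0 := by
  let e := Module.Free.chooseBasis k M
  have coord_homogeneous (i) : ((e.baseChange (MvPolynomial ι k)).repr u i).IsHomogeneous n := by
    obtain ⟨w, rfl⟩ := hu
    rw [← mem_homogeneousSubmodule]
    clear h
    induction w with
    | zero => simp
    | add w w' hw hw' => simpa only [map_add, Finsupp.add_apply] using add_mem hw hw'
    | tmul p m => simpa using Submodule.smul_mem _ _ p.2
  have eval_coord (t : ι → k) (i) (w : MvPolynomial ι k ⊗[k] M) :
      eval t ((e.baseChange (MvPolynomial ι k)).repr w i) =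
        (e.baseChange k).repr ((aeval (R := k) t).toLinearMap.rTensor M w) i := by
    induction w with
    | zero => simp
    | add w w' hw hw' => simp only [map_add, Finsupp.add_apply, hw, hw']
    | tmul p m => simp [aeval_eq_eval, smul_eval]
  refine (e.baseChange (MvPolynomial ι k)).ext_elem fun i => ?_
  rw [map_zero, Finsupp.zero_apply]
  refine (coord_homogeneous i).eq_zero_of_forall_eval_eq_zero_of_le_card (fun t => ?_) hn
  rw [eval_coord, h, map_zero, Finsupp.zero_apply]

variable {L ι : Type*} [Fintype ι] [LieRing L] [LieAlgebra k L]

/-- The generic linear combination `∑ i, X i ⊗ v i` of a finite family `v`, whose specializations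
are the combinations of `v` with coefficients in `k`-algebras. -/
noncomputable def genericElement (v : ι → L) : MvPolynomial ι k ⊗[k] L :=
  ∑ i, X i ⊗ₜ v i

theorem map_aeval_quinticDefect_genericElement {A : Type*} [CommRing A] [Algebra k A] (r : ι → A)
    (v : ι → L) (a b : L) :
    LieAlgebra.ExtendScalars.map (aeval (R := k) r) (LieHom.id : L →ₗ⁅k⁆ L)
        (quinticDefect (genericElement v) (1 ⊗ₜ a) (1 ⊗ₜ b)) =
      quinticDefect (∑ i, r i ⊗ₜ[k] v i) (1 ⊗ₜ a) (1 ⊗ₜ b) := by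
  simp [map_quinticDefect, genericElement]

theorem one_tmul_quinticDefect (A : Type*) [CommRing A] [Algebra k A] (x a b : L) :
    (1 : A) ⊗ₜ[k] quinticDefect x a b = quinticDefect (1 ⊗ₜ x) (1 ⊗ₜ a) (1 ⊗ₜ b) := by
  simp [quinticDefect, tmul_add, tmul_smul]

variable [IsDomain k] [Module.Free k L] [Invertible (2 : k)] [Invertible (3 : k)]

theorem quinticDefect_genericElement_eq_zero {v : ι → L}
    (hv : ∀ t : ι → k, ∀ a b, quinticDefect (∑ i, t i • v i) a b = 0) (a b : L) :
    quinticDefect (genericElement (k := k) v) (1 ⊗ₜ a) (1 ⊗ₜ b) = 0 := by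
  refine eq_zero_of_forall_rTensor_aeval_eq_zero (five_le_mk_of_invertible k)
    (quinticDefect_mem (sum_mem fun i _ => ?_) ?_ ?_) fun t => ?_
  · exact tmul_mem_decomposeTensor (isHomogeneous_X _ i) (v i)
  · exact tmul_mem_decomposeTensor (isHomogeneous_one _ _) a
  · exact tmul_mem_decomposeTensor (isHomogeneous_one _ _) b
  · have hsum : ∑ i, t i ⊗ₜ[k] v i = 1 ⊗ₜ ∑ i, t i • v i := by
      simp [tmul_sum, smul_tmul']
    refine (map_aeval_quinticDefect_genericElement t v a b).trans ?_
    rw [hsum, ← one_tmul_quinticDefect, hv, tmul_zero]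

theorem quinticDefect_sum_tmul_eq_zero {v : ι → L}
    (hv : ∀ t : ι → k, ∀ a b, quinticDefect (∑ i, t i • v i) a b = 0) {R : Type*} [CommRing R]
    [Algebra k R] (r : ι → R) (a b : R ⊗[k] L) :
    quinticDefect (∑ i, r i ⊗ₜ[k] v i) a b = 0 := by
  have hone (a b : L) :
      quinticDefect (∑ i, r i ⊗ₜ[k] v i) ((1 : R) ⊗ₜ a) ((1 : R) ⊗ₜ b) = 0 := by
    rw [← map_aeval_quinticDefect_genericElement, quinticDefect_genericElement_eq_zero hv, map_zero]
  induction a with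
  | zero => simp [quinticDefect]
  | add a a' ha ha' => rw [quinticDefect_add_left, ha, ha', add_zero]
  | tmul p a =>
    induction b with
    | zero => simp [quinticDefect]
    | add b b' hb hb' => rw [quinticDefect_add_right, hb, hb', add_zero]
    | tmul q b =>
      rw [← mul_one p, ← mul_one q, ← smul_eq_mul, ← smul_eq_mul, ← smul_tmul', ← smul_tmul',
        quinticDefect_smul_smul, hone, smul_zero]

theorem quinticDefect_eq_zero_of_mem_baseChange {V : Submodule k L}
    (hV : ∀ x ∈ V, ∀ a b, quinticDefect x a b = 0) {R : Type*} [CommRing R] [Algebra k R]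
    {x : R ⊗[k] L} (hx : x ∈ V.baseChange R) (a b : R ⊗[k] L) : quinticDefect x a b = 0 := by
  obtain ⟨y, rfl⟩ := hx
  obtain ⟨n, r, v, rfl⟩ := exists_sum_tmul_eq y
  have hv (t : Fin n → k) (a b : L) : quinticDefect (∑ i, t i • (v i : L)) a b = 0 :=
    hV _ (sum_mem fun i _ => V.smul_mem _ (v i).2) a b
  simpa using quinticDefect_sum_tmul_eq_zero hv r a b

end GenericElement

theorem stmt3_general {k L : Type*} [CommRing k] [IsDomain k] [Invertible (2 : k)]
    [Invertible (3 : k)] [LieRing L] [LieAlgebra k L] [Module.Free k L]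
    (g : ℤ → Submodule k L) [GradedLieAlgebra g] (hbound : ∀ i, 2 < |i| → g i = ⊥)
    {σ : ℤ} (hσ : σ ≠ 0)
    (halg : ∀ x ∈ g σ, ∀ a b : L, eMap k x ⁅a, b⁆ = ⁅eMap k x a, eMap k x b⁆)
    (R : Type*) [CommRing R] [Algebra k R] [Invertible (2 : R)] [Invertible (3 : R)]
    {x s : R ⊗[k] L} (hx : x ∈ (g σ).baseChange R) (hs : s ∈ (g (2 * σ)).baseChange R) :
    Function.Bijective (eMap R (x + s)) ∧
      ∀ a b : R ⊗[k] L, eMap R (x + s) ⁅a, b⁆ = ⁅eMap R (x + s) a, eMap R (x + s) b⁆ := by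
  let G (i : ℤ) := (g i).baseChange R
  have hG (i : ℤ) (hi : 2 < |i|) : G i = ⊥ := by
    simp only [G, hbound i hi, Submodule.baseChange_bot]
  have hdefect (y : L) (hy : y ∈ g σ) (a b : L) : quinticDefect y a b = 0 :=
    (eMap_lie_of_mem_iff hbound hσ hy a b).mp (halg y hy a b)
  exact ⟨eMap_add_bijective (G := G) hG hσ hx hs, eMap_add_lie (G := G) hG hσ hx hs
    (quinticDefect_eq_zero_of_mem_baseChange hdefect hx)⟩

/-- Let `k` be a field with `char k ≠ 2, 3` and let `L` be a
finite-dimensional 5-graded Lie algebra over `k` that is algebraic.  Then for every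
commutative associative unital `k`-algebra `R` (in which `2` and `3` are automatically
invertible), the base change `R ⊗[k] L`, a 5-graded Lie algebra over `R` whose graded
components are the base-changed submodules `(g i).baseChange R`, is again algebraic:
for every `σ ∈ {1,-1}`, all `x ∈ L_σ ⊗ R` and `s ∈ L_{2σ} ⊗ R`, the endomorphism
`e_σ(x,s)` of `R ⊗[k] L` is an `R`-Lie algebra automorphism. -/
theorem stmt3 {k L : Type*} [Field k] [Invertible (2 : k)] [Invertible (3 : k)]
    [LieRing L] [LieAlgebra k L] [FiniteDimensional k L]
    (g : ℤ → Submodule k L)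
    (hinternal : DirectSum.IsInternal g)
    (hbracket : ∀ i j : ℤ, ∀ x ∈ g i, ∀ y ∈ g j, ⁅x, y⁆ ∈ g (i + j))
    (hbound : ∀ i : ℤ, 2 < |i| → g i = ⊥)
    (halg : ∀ σ : ℤ, σ = 1 ∨ σ = -1 → ∀ x ∈ g σ, ∀ s ∈ g (2 * σ),
      Function.Bijective (eMap k (x + s)) ∧
      ∀ a b : L, eMap k (x + s) ⁅a, b⁆ = ⁅eMap k (x + s) a, eMap k (x + s) b⁆)
    (R : Type*) [CommRing R] [Algebra k R] [Invertible (2 : R)] [Invertible (3 : R)] :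
    ∀ σ : ℤ, σ = 1 ∨ σ = -1 →
      ∀ x ∈ (g σ).baseChange R, ∀ s ∈ (g (2 * σ)).baseChange R,
        Function.Bijective (eMap R (x + s)) ∧
        ∀ a b : R ⊗[k] L,
          eMap R (x + s) ⁅a, b⁆ = ⁅eMap R (x + s) a, eMap R (x + s) b⁆ := by
  intro σ hσ x hx s hs
  let : GradedLieAlgebra g :=
    { hinternal.chooseDecomposition with
      bracket_mem := fun i j x y hx hy => hbracket i j x hx y hy }
  exact stmt3_general g hbound (by grind)
    (fun y hy a b => by simpa using (halg σ hσ y hy 0 (zero_mem _)).2 a b) R hx hs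
end

section
/- Let k be a field with char(k) ≠ 2 and char(k) ≠ 3, let L and L' be finite-dimensional 5-graded Lie algebras over k, and let f : L → L' be a homomorphism of Lie algebras such that f(L_i) ⊆ L'_i for all i ∈ ℤ and the restriction f|_{L_i} : L_i → L'_i is bijective for every i ∈ {1,−1,2,−2}. If L is algebraic, then L' is algebraic. -/
/-!
Up to reversing degrees, `v` has positive degree, so `ad v` is nilpotent and `e = exp (ad v)` is
bijective. Let `a`, `b` be homogeneous of degrees `p`, `q`. By the Leibniz rule, `e ⁅a, b⁆` and
`⁅e a, e b⁆` differ by a combination of brackets `⁅(ad v)^i a, (ad v)^j b⁆` with `5 ≤ i + j`,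
which live in degree at least `p + q + 5`. If `-2 ≤ p + q` that degree exceeds `2` and the
brackets vanish. Otherwise both `p` and `q` are `-1` or `-2`, so that `a`, `b` and `v` all lift
along `f`, and the identity is the image of the one in the source algebra.
-/

section TruncatedExponential

open Finset Ring
open scoped Nat

variable {R A L : Type*} [CommRing R] [Ring A] [Algebra R A] [LieRing L] [LieAlgebra R L]

variable (R) in
/-- The exponential series of `x` truncated to its first `N` terms. The coefficients are the
inverses of `n!` in `R`, with the junk value `0` where `n!` is not a unit. -/
noncomputable def truncExp (N : ℕ) (x : A) : A :=
  ∑ n ∈ range N, (n ! : R)⁻¹ʳ • x ^ n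

theorem isUnit_truncExp_succ (N : ℕ) {x : A} (hx : IsNilpotent x) :
    IsUnit (truncExp R (N + 1) x) := by
  set y : A := ∑ n ∈ range N, ((n + 1)! : R)⁻¹ʳ • x ^ n with hy
  have hxy : Commute x y :=
    Commute.sum_right _ _ _ fun n _ => ((Commute.refl x).pow_right n).smul_right _
  have hexp : truncExp R (N + 1) x = x * y + 1 := by
    simp [truncExp, sum_range_succ', hy, mul_sum, pow_succ']
  exact hexp ▸ (hxy.isNilpotent_mul_right hx).isUnit_add_one

theorem inverse_factorial_mul_choose {n : ℕ} (hn : IsUnit (n ! : R)) {ij : ℕ × ℕ}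
    (hij : ij ∈ antidiagonal n) :
    (n ! : R)⁻¹ʳ * (n.choose ij.1 : R) = (ij.1 ! : R)⁻¹ʳ * (ij.2 ! : R)⁻¹ʳ := by
  rw [Nat.castChoose_eq hn hij, mul_assoc, inverse_mul_cancel_left _ _ hn]

theorem sum_range_sum_antidiagonal {M : Type*} [AddCommMonoid M] (N : ℕ) (f : ℕ × ℕ → M) :
    ∑ n ∈ range N, ∑ ij ∈ antidiagonal n, f ij =
      ∑ ij ∈ range N ×ˢ range N with ij.1 + ij.2 < N, f ij := by
  rw [sum_sigma']
  refine sum_bij' (fun x _ => x.2) (fun ij _ => ⟨ij.1 + ij.2, ij⟩) ?_ ?_ ?_ ?_ ?_ <;>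
    grind [HasAntidiagonal.mem_antidiagonal]

theorem truncExp_ad_lie_of_lie_eq_zero {N : ℕ} (hN : IsUnit ((N - 1)! : R)) {v a b : L}
    (hzero : ∀ i j, N ≤ i + j → ⁅(LieAlgebra.ad R L v ^ i) a, (LieAlgebra.ad R L v ^ j) b⁆ = 0) :
    truncExp R N (LieAlgebra.ad R L v) ⁅a, b⁆ =
      ⁅truncExp R N (LieAlgebra.ad R L v) a, truncExp R N (LieAlgebra.ad R L v) b⁆ := by
  set D := LieAlgebra.ad R L v
  let summand (ij : ℕ × ℕ) : L :=
    ((ij.1 ! : R)⁻¹ʳ * (ij.2 ! : R)⁻¹ʳ) • ⁅(D ^ ij.1) a, (D ^ ij.2) b⁆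
  have leibniz : ∀ n ∈ range N,
      (n ! : R)⁻¹ʳ • (D ^ n) ⁅a, b⁆ = ∑ ij ∈ antidiagonal n, summand ij := by
    intro n hn
    rw [LieAlgebra.ad_pow_lie, smul_sum]
    refine sum_congr rfl fun ij hij => ?_
    rw [← Nat.cast_smul_eq_nsmul R, smul_smul,
      inverse_factorial_mul_choose (hN.natCast_factorial_of_lt (mem_range.1 hn)) hij]
  calc truncExp R N D ⁅a, b⁆
      = ∑ n ∈ range N, ∑ ij ∈ antidiagonal n, summand ij := by
        simpa [truncExp, LinearMap.sum_apply] using sum_congr rfl leibniz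
    _ = ∑ ij ∈ range N ×ˢ range N with ij.1 + ij.2 < N, summand ij :=
        sum_range_sum_antidiagonal N summand
    _ = ∑ ij ∈ range N ×ˢ range N, summand ij := by
        refine sum_filter_of_ne fun ij _ hne => ?_
        contrapose! hne
        simp only [summand, hzero _ _ hne, smul_zero]
    _ = ⁅truncExp R N D a, truncExp R N D b⁆ := by
        simp [truncExp, summand, LinearMap.sum_apply, sum_lie_sum, sum_product, smul_smul,
          mul_comm]

end TruncatedExponential

section EMap

open Finset Ring
open scoped Nat

variable {R L L' : Type*} [CommRing R] [Invertible (2 : R)] [Invertible (3 : R)]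
  [LieRing L] [LieAlgebra R L] [LieRing L'] [LieAlgebra R L']

variable (R) in
theorem isUnit_factorial_four : IsUnit (4 ! : R) := by
  have h : (4 ! : R) = 2 ^ 3 * 3 := by norm_num [Nat.factorial]
  exact h ▸ ((isUnit_of_invertible 2).pow 3).mul (isUnit_of_invertible 3)

theorem eMap_eq_truncExp (v : L) : eMap R v = truncExp R 5 (LieAlgebra.ad R L v) := by
  have h6 : (6 : R)⁻¹ʳ = ⅟2 * ⅟3 := by
    rw [show (6 : R) = 3 * 2 by norm_num, mul_inverse_rev, inverse_invertible, inverse_invertible]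
  have h24 : (24 : R)⁻¹ʳ = ⅟2 * ⅟2 * ⅟2 * ⅟3 := by
    rw [show (24 : R) = 3 * (2 * (2 * 2)) by norm_num]
    simp only [mul_inverse_rev, inverse_invertible]
  simp [eMap, truncExp, sum_range_succ, Nat.factorial, h6, h24, inverse_invertible]

theorem map_eMap (f : L →ₗ⁅R⁆ L') (v a : L) : f (eMap R v a) = eMap R (f v) (f a) := by
  simp [eMap, pow_succ]

theorem eMap_bijective_of_isNilpotent {v : L} (hv : IsNilpotent (LieAlgebra.ad R L v)) :
    Function.Bijective (eMap R v) := by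
  rw [← Module.End.isUnit_iff, eMap_eq_truncExp]
  exact isUnit_truncExp_succ 4 hv

theorem eMap_lie_of_lie_eq_zero {v a b : L}
    (hzero : ∀ i j, 5 ≤ i + j → ⁅(LieAlgebra.ad R L v ^ i) a, (LieAlgebra.ad R L v ^ j) b⁆ = 0) :
    eMap R v ⁅a, b⁆ = ⁅eMap R v a, eMap R v b⁆ := by
  simpa only [eMap_eq_truncExp] using truncExp_ad_lie_of_lie_eq_zero (isUnit_factorial_four R) hzero

end EMap

section Filtration

variable {R L : Type*} [CommRing R] [LieRing L] [LieAlgebra R L]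

/-- The filtration of `L` attached to a family `g` of submodules indexed by degree: the sum of
the pieces of degree at least `m`. -/
def degreeFiltration (g : ℤ → Submodule R L) (m : ℤ) : Submodule R L :=
  ⨆ i ≥ m, g i

variable {g : ℤ → Submodule R L}

theorem mem_degreeFiltration {m i : ℤ} (hmi : m ≤ i) {x : L} (hx : x ∈ g i) :
    x ∈ degreeFiltration g m :=
  le_iSup₂_of_le (f := fun i (_ : i ≥ m) => g i) i hmi le_rfl hx

theorem lie_mem_degreeFiltration (hg : ∀ i j, ∀ x ∈ g i, ∀ y ∈ g j, ⁅x, y⁆ ∈ g (i + j))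
    {m n : ℤ} {x y : L} (hx : x ∈ degreeFiltration g m) (hy : y ∈ degreeFiltration g n) :
    ⁅x, y⁆ ∈ degreeFiltration g (m + n) := by
  suffices h : Submodule.map₂ (LieAlgebra.ad R L : L →ₗ[R] Module.End R L)
      (degreeFiltration g m) (degreeFiltration g n) ≤ degreeFiltration g (m + n) from
    Submodule.map₂_le.1 h x hx y hy
  conv_lhs => simp only [degreeFiltration, Submodule.map₂_iSup_left, Submodule.map₂_iSup_right]
  simp only [iSup_le_iff, Submodule.map₂_le]
  exact fun j hj i hi x hx y hy => mem_degreeFiltration (add_le_add hi hj) (hg i j x hx y hy)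

theorem ad_pow_mem_degreeFiltration (hg : ∀ i j, ∀ x ∈ g i, ∀ y ∈ g j, ⁅x, y⁆ ∈ g (i + j))
    {v : L} (hv : v ∈ degreeFiltration g 1) {m : ℤ} {a : L} (ha : a ∈ degreeFiltration g m)
    (n : ℕ) : (LieAlgebra.ad R L v ^ n) a ∈ degreeFiltration g (m + n) := by
  induction n with
  | zero => simpa using ha
  | succ n ih =>
    rw [pow_succ', Module.End.mul_apply, LieAlgebra.ad_apply]
    convert lie_mem_degreeFiltration hg hv ih using 2
    push_cast
    ring

end Filtration

theorem map_lie_of_iSup_eq_top {R L ι : Type*} [CommRing R] [LieRing L] [LieAlgebra R L]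
    {g : ι → Submodule R L} (hg : ⨆ i, g i = ⊤) (e : Module.End R L)
    (he : ∀ i j, ∀ a ∈ g i, ∀ b ∈ g j, e ⁅a, b⁆ = ⁅e a, e b⁆) (a b : L) :
    e ⁅a, b⁆ = ⁅e a, e b⁆ := by
  have mem_iSup (x : L) : x ∈ ⨆ i, g i := hg ▸ Submodule.mem_top
  induction mem_iSup a using Submodule.iSup_induction' with
  | zero => simp
  | add a a' _ _ h h' => simp only [add_lie, map_add, h, h']
  | mem i a ha =>
    induction mem_iSup b using Submodule.iSup_induction' with
    | zero => simp
    | add b b' _ _ h h' => simp only [lie_add, map_add, h, h']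
    | mem j b hb => exact he i j a ha b hb

/-- The pieces of a 5-grading of the Lie algebra `L`, except that their sum is not required to
be direct. -/
structure IsFiveGradedSum {R L : Type*} [CommRing R] [LieRing L] [LieAlgebra R L]
    (g : ℤ → Submodule R L) : Prop where
  iSup_eq_top : ⨆ i, g i = ⊤
  lie_mem : ∀ i j, ∀ x ∈ g i, ∀ y ∈ g j, ⁅x, y⁆ ∈ g (i + j)
  eq_bot : ∀ i, 2 < |i| → g i = ⊥

namespace IsFiveGradedSum

variable {R L : Type*} [CommRing R] [LieRing L] [LieAlgebra R L] {g : ℤ → Submodule R L}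

theorem comp_mul_left (hg : IsFiveGradedSum g) {σ : ℤ} (hσ : σ = 1 ∨ σ = -1) :
    IsFiveGradedSum fun i => g (σ * i) where
  iSup_eq_top := by
    have hsurj : Function.Surjective (σ * ·) := fun i =>
      ⟨σ * i, by rcases hσ with rfl | rfl <;> ring⟩
    rw [hsurj.iSup_comp g, hg.iSup_eq_top]
  lie_mem i j x hx y hy := mul_add σ i j ▸ hg.lie_mem _ _ x hx y hy
  eq_bot i hi := hg.eq_bot _ (by rcases hσ with rfl | rfl <;> simpa using hi)

theorem degreeFiltration_neg_two (hg : IsFiveGradedSum g) : degreeFiltration g (-2) = ⊤ := by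
  refine eq_top_iff.2 (hg.iSup_eq_top ▸ iSup_le fun i => ?_)
  by_cases hi : -2 ≤ i
  · exact fun x hx => mem_degreeFiltration hi hx
  · exact hg.eq_bot i (by grind) ▸ bot_le

theorem eq_zero_of_mem_degreeFiltration (hg : IsFiveGradedSum g) {m : ℤ} (hm : 2 < m) {x : L}
    (hx : x ∈ degreeFiltration g m) : x = 0 := by
  have hbot : degreeFiltration g m = ⊥ :=
    iSup₂_eq_bot.2 fun i hi => hg.eq_bot i (lt_abs.2 (.inl (hm.trans_le hi)))
  simpa [hbot] using hx

theorem isNilpotent_ad (hg : IsFiveGradedSum g) {v : L} (hv : v ∈ degreeFiltration g 1) :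
    IsNilpotent (LieAlgebra.ad R L v) := by
  refine ⟨5, LinearMap.ext fun a => ?_⟩
  have ha : a ∈ degreeFiltration g (-2) := hg.degreeFiltration_neg_two ▸ Submodule.mem_top
  exact hg.eq_zero_of_mem_degreeFiltration (by norm_num)
    (ad_pow_mem_degreeFiltration hg.lie_mem hv ha 5)

variable [Invertible (2 : R)] [Invertible (3 : R)]

theorem eMap_lie_of_neg_two_le (hg : IsFiveGradedSum g) {v : L} (hv : v ∈ degreeFiltration g 1)
    {p q : ℤ} (hpq : -2 ≤ p + q) {a b : L} (ha : a ∈ degreeFiltration g p)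
    (hb : b ∈ degreeFiltration g q) : eMap R v ⁅a, b⁆ = ⁅eMap R v a, eMap R v b⁆ := by
  refine eMap_lie_of_lie_eq_zero fun i j hij => hg.eq_zero_of_mem_degreeFiltration ?_
    (lie_mem_degreeFiltration hg.lie_mem (ad_pow_mem_degreeFiltration hg.lie_mem hv ha i)
      (ad_pow_mem_degreeFiltration hg.lie_mem hv hb j))
  omega

theorem eMap_lie_of_forall_neg (hg : IsFiveGradedSum g) {v : L} (hv : v ∈ degreeFiltration g 1)
    (hneg : ∀ p q, (p = -1 ∨ p = -2) → (q = -1 ∨ q = -2) → ∀ a ∈ g p, ∀ b ∈ g q,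
      eMap R v ⁅a, b⁆ = ⁅eMap R v a, eMap R v b⁆) (a b : L) :
    eMap R v ⁅a, b⁆ = ⁅eMap R v a, eMap R v b⁆ := by
  refine map_lie_of_iSup_eq_top hg.iSup_eq_top _ (fun p q a ha b hb => ?_) a b
  by_cases hp : 2 < |p|
  · obtain rfl : a = 0 := by simpa [hg.eq_bot p hp] using ha
    simp
  by_cases hq : 2 < |q|
  · obtain rfl : b = 0 := by simpa [hg.eq_bot q hq] using hb
    simp
  by_cases hpq : -2 ≤ p + q
  · exact hg.eMap_lie_of_neg_two_le hv hpq (mem_degreeFiltration le_rfl ha)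
      (mem_degreeFiltration le_rfl hb)
  · exact hneg p q (by grind) (by grind) a ha b hb

end IsFiveGradedSum

theorem stmt4_general {R L L' : Type*} [CommRing R] [Invertible (2 : R)] [Invertible (3 : R)]
    [LieRing L] [LieAlgebra R L] [LieRing L'] [LieAlgebra R L']
    {g : ℤ → Submodule R L} {g' : ℤ → Submodule R L'} (hg' : IsFiveGradedSum g')
    (f : L →ₗ⁅R⁆ L')
    (hf : ∀ i : ℤ, i = 1 ∨ i = -1 ∨ i = 2 ∨ i = -2 →
      Set.SurjOn f (g i : Set L) (g' i : Set L'))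
    (halg : ∀ σ : ℤ, σ = 1 ∨ σ = -1 → ∀ x ∈ g σ, ∀ s ∈ g (2 * σ),
      ∀ a b : L, eMap R (x + s) ⁅a, b⁆ = ⁅eMap R (x + s) a, eMap R (x + s) b⁆) :
    ∀ σ : ℤ, σ = 1 ∨ σ = -1 → ∀ x ∈ g' σ, ∀ s ∈ g' (2 * σ),
      Function.Bijective (eMap R (x + s)) ∧
      ∀ a b : L', eMap R (x + s) ⁅a, b⁆ = ⁅eMap R (x + s) a, eMap R (x + s) b⁆ := by
  intro σ hσ x hx s hs
  have hgσ := hg'.comp_mul_left hσ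
  have hv : x + s ∈ degreeFiltration (fun i => g' (σ * i)) 1 :=
    add_mem (mem_degreeFiltration le_rfl (by simpa using hx))
      (mem_degreeFiltration one_le_two (by simpa [mul_comm] using hs))
  refine ⟨eMap_bijective_of_isNilpotent (hgσ.isNilpotent_ad hv), hgσ.eMap_lie_of_forall_neg hv ?_⟩
  intro p q hp hq a ha b hb
  obtain ⟨y, hy, rfl⟩ := hf σ (by omega) hx
  obtain ⟨t, ht, rfl⟩ := hf (2 * σ) (by omega) hs
  obtain ⟨a, -, rfl⟩ := hf (σ * p) (by rcases hσ with rfl | rfl <;> omega) ha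
  obtain ⟨b, -, rfl⟩ := hf (σ * q) (by rcases hσ with rfl | rfl <;> omega) hb
  simp only [← map_add, ← LieHom.map_lie, ← map_eMap, halg σ hσ y hy t ht a b]

/-- Let `k` be a field with `char k ≠ 2, 3`, let `L`, `L'` be
finite-dimensional 5-graded Lie algebras over `k`, and let `f : L → L'` be a Lie algebra
homomorphism with `f(L_i) ⊆ L'_i` for all `i`, whose restriction `L_i → L'_i` is
bijective for every `i ∈ {1,-1,2,-2}`.  If `L` is algebraic then `L'` is algebraic. -/
theorem stmt4 {k L L' : Type*} [Field k] [Invertible (2 : k)] [Invertible (3 : k)]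
    [LieRing L] [LieAlgebra k L] [FiniteDimensional k L]
    [LieRing L'] [LieAlgebra k L'] [FiniteDimensional k L']
    (g : ℤ → Submodule k L) (g' : ℤ → Submodule k L')
    (hinternal : DirectSum.IsInternal g) (hinternal' : DirectSum.IsInternal g')
    (hbracket : ∀ i j : ℤ, ∀ x ∈ g i, ∀ y ∈ g j, ⁅x, y⁆ ∈ g (i + j))
    (hbracket' : ∀ i j : ℤ, ∀ x ∈ g' i, ∀ y ∈ g' j, ⁅x, y⁆ ∈ g' (i + j))
    (hbound : ∀ i : ℤ, 2 < |i| → g i = ⊥)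
    (hbound' : ∀ i : ℤ, 2 < |i| → g' i = ⊥)
    (f : L →ₗ⁅k⁆ L')
    (hfgrade : ∀ i : ℤ, ∀ v ∈ g i, f v ∈ g' i)
    (hfbij : ∀ i : ℤ, i = 1 ∨ i = -1 ∨ i = 2 ∨ i = -2 →
      Set.BijOn f (g i : Set L) (g' i : Set L'))
    (halg : ∀ σ : ℤ, σ = 1 ∨ σ = -1 → ∀ x ∈ g σ, ∀ s ∈ g (2 * σ),
      Function.Bijective (eMap k (x + s)) ∧
      ∀ a b : L, eMap k (x + s) ⁅a, b⁆ = ⁅eMap k (x + s) a, eMap k (x + s) b⁆) :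
    ∀ σ : ℤ, σ = 1 ∨ σ = -1 → ∀ x ∈ g' σ, ∀ s ∈ g' (2 * σ),
      Function.Bijective (eMap k (x + s)) ∧
      ∀ a b : L', eMap k (x + s) ⁅a, b⁆ = ⁅eMap k (x + s) a, eMap k (x + s) b⁆ := by
  exact stmt4_general ⟨hinternal'.submodule_iSup_eq_top, hbracket', hbound'⟩ f
    (fun i hi => (hfbij i hi).surjOn) fun σ hσ x hx s hs => (halg σ hσ x hx s hs).2
end

section
/- Let A be a structurable division algebra over a field k with char(k) ≠ 2 and char(k) ≠ 3, and let 0 ≠ s ∈ S with conjugate inverse ŝ ∈ S. Then s + ŝ ≠ 0. Moreover, let t ∈ S be the conjugate inverse of s + ŝ (so t·((s+ŝ)·z) = (s+ŝ)·(t·z) = −z for all z ∈ A) and set u := −(ŝ·t). Then: (1) {1,u,z} = z + s·(t·z) for all z ∈ A, i.e. V_{1,u} = id + L_s L_t; (2) s·u = −(1/3)·U_1(t·1), equivalently s·u = t; (3) ψ(1, s·t) = 0; and (4) u is the conjugate inverse of 1 − s·s, i.e. V_{1−s·s, u} = id_A. -/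
/-- The triple product `{x,y,z} := (x·ȳ)·z + (z·ȳ)·x − (z·x̄)·y` of a (not necessarily
associative or commutative) unital algebra `A` equipped with an involution `bar`. -/
def strTrip {A : Type*} [NonAssocRing A] (bar : A → A) (x y z : A) : A :=
  x * bar y * z + z * bar y * x - z * bar x * y

/-- `ψ(x,y) := x·ȳ − y·x̄`. -/
def strPsi {A : Type*} [NonAssocRing A] (bar : A → A) (x y : A) : A :=
  x * bar y - y * bar x

/-- `q_x(s) := (1/6)·ψ(x, U_x(s·x))`, where `U_x y := {x,y,x}`. -/
noncomputable def strQ (k : Type*) [Field k] {A : Type*} [NonAssocRing A] [Module k A]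
    (bar : A → A) (x s : A) : A :=
  (6 : k)⁻¹ • strPsi bar x (strTrip bar x (s * x) x)

/-- `(A, bar)` is a structurable algebra over `k`: `bar` is a `k`-linear involutive
anti-automorphism of `A`, and the operator identity
`[V_{x,y}, V_{z,w}] = V_{{x,y,z},w} − V_{z,{y,x,w}}` holds, where
`V_{x,y} z := strTrip bar x y z`. -/
def IsStructurable (k : Type*) [Field k] (A : Type*) [NonAssocRing A] [Module k A]
    (bar : A → A) : Prop :=
  (∀ x y : A, bar (x + y) = bar x + bar y) ∧
  (∀ (c : k) (x : A), bar (c • x) = c • bar x) ∧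
  (∀ x y : A, bar (x * y) = bar y * bar x) ∧
  (∀ x : A, bar (bar x) = x) ∧
  (∀ x y z w a : A,
    strTrip bar x y (strTrip bar z w a) - strTrip bar z w (strTrip bar x y a)
      = strTrip bar (strTrip bar x y z) w a - strTrip bar z (strTrip bar y x w) a)

/-- `A` is a (conjugate) division algebra: every nonzero `u ∈ A` has a conjugate
inverse `v`, i.e. `V_{u,v} = id`. -/
def IsConjDivision {A : Type*} [NonAssocRing A] (bar : A → A) : Prop :=
  ∀ u : A, u ≠ 0 → ∃ v : A, ∀ z : A, strTrip bar u v z = z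

/-!
Every skew `s` acts by the derivation `V_{s,1} = L_s + 2 R_s` of the triple product, and this
forces skew-alternativity: `[s,x,y] = -[x,s,y] = [x,y,s]` for the associator. Consequently
`L_{ab} = L_a L_b` as soon as `a` is skew and `L_a`, `L_b` commute. If `t` is the conjugate inverse
of `s + ŝ`, the operators `L_s`, `L_ŝ`, `L_t` commute pairwise and satisfy `L_s L_ŝ = -1` and
`(L_s + L_ŝ) L_t = -1`, so each of the four identities is a computation in the commutative ring
they generate. If `s + ŝ` were `0`, then `s * s = 1` and `(1 + s) * (1 - s) = 0`; were `v` a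
conjugate inverse of `1 + s`, multiplying `V_{1+s,v} 1 = 1` by `1 - s` on both sides and comparing
with the conjugate of `V_{1+s,v} (1 + s) = 1 + s` would give `3 (1 - s) = 0`, so `s = 1` would not
be skew.
-/

open AddMonoid.End (mulLeft)

theorem commute_of_mul_eq_neg_one {R : Type*} [Ring R] {a b c : R} (hab : a * b = -1)
    (hba : b * a = -1) (hac : Commute a c) : Commute b c := by
  let u : Rˣ := ⟨a, -b, by rw [mul_neg, hab, neg_neg], by rw [neg_mul, hba, neg_neg]⟩
  have hu : Commute (↑u⁻¹ : R) c := Commute.units_inv_left (u := u) hac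
  exact neg_neg b ▸ hu.neg_left

theorem isSMulRegular_six (R A : Type*) [Semiring R] [Invertible (2 : R)] [Invertible (3 : R)]
    [AddCommMonoid A] [Module R A] : IsSMulRegular A (6 : ℕ) := by
  have h : IsUnit ((6 : ℕ) : R) := by
    rw [show ((6 : ℕ) : R) = 2 * 3 by norm_num]
    exact (isUnit_of_invertible 2).mul (isUnit_of_invertible 3)
  exact (isSMulRegular_map _ (Nat.cast_smul_eq_nsmul R 6)).1 (h.isSMulRegular A)

theorem eq_zero_of_isSelfAdjoint_of_skew {A : Type*} [AddCommGroup A] [Star A]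
    (h2 : IsSMulRegular A (2 : ℕ)) {u : A} (hu : IsSelfAdjoint u) (hskew : star u = -u) :
    u = 0 := by
  refine h2.right_eq_zero_of_smul ?_
  rw [two_nsmul, ← sub_neg_eq_add, ← hskew, hu.star_eq, sub_self]

theorem star_associator {A : Type*} [NonUnitalNonAssocRing A] [StarRing A] (x y z : A) :
    star (associator x y z) = -associator (star z) (star y) (star x) := by
  simp only [associator, star_sub, star_mul, neg_sub]

theorem isSelfAdjoint_mul_of_skew {A : Type*} [NonUnitalNonAssocRing A] [StarRing A] {a b : A}
    (ha : star a = -a) (hb : star b = -b) (hab : Commute a b) : IsSelfAdjoint (a * b) := by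
  rw [IsSelfAdjoint, star_mul, ha, hb, neg_mul_neg, hab.eq]

section LeftMultiplication

variable {A : Type*} [NonAssocRing A] {a b : A}

theorem commute_mulLeft_iff :
    Commute (mulLeft a) (mulLeft b) ↔ ∀ z, a * (b * z) = b * (a * z) :=
  DFunLike.ext_iff

theorem commute_of_commute_mulLeft (h : Commute (mulLeft a) (mulLeft b)) : Commute a b := by
  have h1 := commute_mulLeft_iff.1 h 1
  rwa [mul_one, mul_one] at h1

theorem commute_mulLeft_of_mulLeft_add {t : A} (hab : Commute (mulLeft a) (mulLeft b))
    (hleft : mulLeft t * mulLeft (a + b) = -1) (hright : mulLeft (a + b) * mulLeft t = -1) :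
    Commute (mulLeft a) (mulLeft t) ∧ Commute (mulLeft b) (mulLeft t) := by
  rw [map_add] at hleft hright
  exact ⟨(commute_of_mul_eq_neg_one hright hleft ((Commute.refl _).add_left hab.symm)).symm,
    (commute_of_mul_eq_neg_one hright hleft (hab.add_left (Commute.refl _))).symm⟩

end LeftMultiplication

section StarRing

variable {A : Type*} [NonAssocRing A] [StarRing A]

theorem strTrip_one_of_skew {s : A} (hs : star s = -s) (z : A) :
    strTrip star 1 s z = -strTrip star s 1 z := by
  simp only [strTrip, hs, star_one, one_mul, mul_one, mul_neg, neg_mul]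
  abel

theorem strTrip_one_skew_one {s : A} (hs : star s = -s) : strTrip star 1 s 1 = -(3 • s) := by
  simp only [strTrip, hs, star_one, one_mul, mul_one]
  abel

theorem strTrip_one_of_isSelfAdjoint {u : A} (hu : IsSelfAdjoint u) (z : A) :
    strTrip star 1 u z = u * z := by
  simp only [strTrip, hu.star_eq, star_one, one_mul, mul_one, add_sub_cancel_right]

theorem strPsi_one_of_isSelfAdjoint {u : A} (hu : IsSelfAdjoint u) : strPsi star 1 u = 0 := by
  simp only [strPsi, hu.star_eq, star_one, one_mul, mul_one, sub_self]

/-- `v` is a conjugate inverse of `u`: the operator `V_{u,v}` is the identity. -/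
def IsConjInverse (u v : A) : Prop :=
  ∀ z : A, strTrip star u v z = z

theorem isConjInverse_of_mulLeft_mul_mulLeft {x u : A} (hx : IsSelfAdjoint x)
    (hu : IsSelfAdjoint u) (hxu : mulLeft x * mulLeft u = 1) (hux : mulLeft u * mulLeft x = 1) :
    IsConjInverse x u := by
  have mul_right_cancel_of_mul_left_cancel {a b : A} (ha : IsSelfAdjoint a) (hb : IsSelfAdjoint b)
      (hab : mulLeft a * mulLeft b = 1) (z : A) : z * b * a = z := by
    have h : a * (b * star z) = star z := DFunLike.congr_fun hab (star z)
    simpa only [star_mul, star_star, ha.star_eq, hb.star_eq] using congrArg star h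
  have hone : x * u = 1 := by
    have h : x * (u * 1) = 1 := DFunLike.congr_fun hxu 1
    rwa [mul_one] at h
  intro z
  rw [strTrip, hx.star_eq, hu.star_eq, hone, one_mul,
    mul_right_cancel_of_mul_left_cancel hx hu hxu, mul_right_cancel_of_mul_left_cancel hu hx hux,
    add_sub_cancel_right]

namespace IsConjInverse

variable {a b : A}

theorem mul_eq_neg_one (h : IsConjInverse a b) (ha : star a = -a) (hb : star b = -b) :
    a * b = -1 := by
  have hba : b * a = -1 := by
    have h1 := h 1
    simp only [strTrip, ha, hb, one_mul, mul_one, mul_neg, neg_mul] at h1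
    linear_combination (norm := abel) -h1
  simpa only [star_mul, star_neg, star_one, ha, hb, neg_mul_neg] using congrArg star hba

theorem commute_mulLeft (h : IsConjInverse a b) (ha : star a = -a) (hb : star b = -b) :
    Commute (mulLeft a) (mulLeft b) := by
  have mul_right_comm_star (z : A) : star z * a * b = star z * b * a := by
    have hz := h (star z)
    simp only [strTrip, ha, hb, mul_neg, neg_mul, h.mul_eq_neg_one ha hb, neg_neg, one_mul] at hz
    linear_combination (norm := abel) hz
  refine commute_mulLeft_iff.2 fun z => ?_
  have hz := congrArg star (mul_right_comm_star z)
  simpa only [star_mul, star_star, ha, hb, neg_mul, mul_neg, neg_neg] using hz.symm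

end IsConjInverse

end StarRing

/-- A structurable ring: a unital nonassociative ring with involution satisfying the operator
identity of a structurable algebra. There are no scalars; where `2` and `3` have to be cancelled,
this is assumed in the form `IsSMulRegular A (6 : ℕ)`. -/
class IsStructurableRing (A : Type*) [NonAssocRing A] [StarRing A] : Prop where
  strTrip_commutator : ∀ x y z w a : A,
    strTrip star x y (strTrip star z w a) - strTrip star z w (strTrip star x y a)
      = strTrip star (strTrip star x y z) w a - strTrip star z (strTrip star y x w) a

namespace IsStructurable

variable {k : Type*} [Field k] {A : Type*} [NonAssocRing A] [Module k A] {bar : A → A}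

/-- The involution of a structurable algebra as a `StarRing` structure, with `star := bar`. -/
abbrev toStarRing (h : IsStructurable k A bar) : StarRing A where
  star := bar
  star_involutive := h.2.2.2.1
  star_mul := h.2.2.1
  star_add := h.1

theorem isStructurableRing (h : IsStructurable k A bar) :
    letI := h.toStarRing
    IsStructurableRing A :=
  letI := h.toStarRing
  ⟨h.2.2.2.2⟩

end IsStructurable

section StructurableRing

variable {A : Type*} [NonAssocRing A] [StarRing A] [IsStructurableRing A]

theorem strTrip_skew_one_strTrip {s : A} (hs : star s = -s) (x y z : A) :
    strTrip star s 1 (strTrip star x y z) =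
      strTrip star (strTrip star s 1 x) y z + strTrip star x (strTrip star s 1 y) z +
        strTrip star x y (strTrip star s 1 z) := by
  have h := IsStructurableRing.strTrip_commutator s 1 x y z
  have strTrip_neg_middle (w : A) : strTrip star x (-w) z = -strTrip star x w z := by
    simp only [strTrip, star_neg, mul_neg, neg_mul]
    abel
  rw [strTrip_one_of_skew hs, strTrip_neg_middle] at h
  linear_combination (norm := abel) h

theorem associator_skew_right (h6 : IsSMulRegular A (6 : ℕ)) {s : A} (hs : star s = -s) (x y : A) :
    associator x y s = -associator x s y := by
  have key : 6 • (associator x y s + associator x s y) = 0 := by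
    have e₁ := strTrip_skew_one_strTrip hs 1 x y
    have e₂ := congrArg star (strTrip_skew_one_strTrip hs 1 y x)
    have e₃ := strTrip_skew_one_strTrip hs x 1 y
    have e₄ := strTrip_skew_one_strTrip hs x (star y) 1
    have e₅ := strTrip_skew_one_strTrip hs (star y) x 1
    have e₆ := strTrip_skew_one_strTrip hs (star y) 1 (star x)
    simp only [strTrip, star_add, star_neg, star_sub, star_mul, star_star, star_one, hs, mul_add,
      add_mul, mul_sub, sub_mul, mul_one, one_mul, neg_mul, mul_neg, neg_neg]
      at e₁ e₂ e₃ e₄ e₅ e₆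
    simp only [associator]
    -- Each `eᵢ` is a linear relation between associators of `s`, `x`, `y` and their conjugates;
    -- this combination of them eliminates every associator except the two in question.
    linear_combination (norm := abel) e₁ + e₂ + 2 • e₃ - 2 • e₄ - e₅ - e₆
  exact eq_neg_of_add_eq_zero_left (h6.right_eq_zero_of_smul key)

theorem associator_skew_left (h6 : IsSMulRegular A (6 : ℕ)) {s : A} (hs : star s = -s) (x y : A) :
    associator s x y = -associator x s y := by
  have associator_neg (a b : A) : associator (-s) a b = -associator s a b ∧
      associator a (-s) b = -associator a s b := by
    simp only [associator, neg_mul, mul_neg, neg_sub_neg, neg_sub, and_self]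
  have h := congrArg star (associator_skew_right h6 hs (star y) (star x))
  simpa only [star_associator, star_neg, star_star, hs, associator_neg, neg_neg] using h

theorem associator_rotate_of_skew (h6 : IsSMulRegular A (6 : ℕ)) {a b : A} (ha : star a = -a)
    (hb : star b = -b) (z : A) : associator a b z = associator z a b :=
  calc associator a b z = -associator b a z := associator_skew_left h6 ha b z
    _ = associator b z a := (associator_skew_right h6 ha b z).symm
    _ = -associator z b a := associator_skew_left h6 hb z a
    _ = associator z a b := (associator_skew_right h6 hb z a).symm

theorem mulLeft_mul_of_skew (h6 : IsSMulRegular A (6 : ℕ)) {a b : A} (ha : star a = -a)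
    (hab : Commute (mulLeft a) (mulLeft b)) : mulLeft (a * b) = mulLeft a * mulLeft b := by
  have h2 : IsSMulRegular A (2 : ℕ) := IsSMulRegular.of_mul (a := 3) h6
  ext z
  have hswap : associator b a z = associator a b z := by
    rw [associator, associator, (commute_of_commute_mulLeft hab).eq, commute_mulLeft_iff.1 hab]
  have hzero : 2 • associator a b z = 0 := by
    rw [two_nsmul]
    nth_rw 1 [associator_skew_left h6 ha, hswap, neg_add_cancel]
  exact sub_eq_zero.1 (h2.right_eq_zero_of_smul hzero)

theorem mul_self_mul_of_skew (h6 : IsSMulRegular A (6 : ℕ)) {s : A} (hs : star s = -s) (z : A) :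
    s * s * z = s * (s * z) :=
  DFunLike.congr_fun (mulLeft_mul_of_skew h6 hs (Commute.refl _)) z

theorem associator_self_right_of_skew (h6 : IsSMulRegular A (6 : ℕ)) {s : A} (hs : star s = -s)
    (z : A) : associator z s s = 0 := by
  rw [← associator_rotate_of_skew h6 hs hs, associator, mul_self_mul_of_skew h6 hs, sub_self]

theorem mul_mul_self_of_skew (h6 : IsSMulRegular A (6 : ℕ)) {s : A} (hs : star s = -s) (z : A) :
    z * s * s = z * (s * s) :=
  sub_eq_zero.1 (associator_self_right_of_skew h6 hs z)

theorem mul_mul_flexible_of_skew (h6 : IsSMulRegular A (6 : ℕ)) {s : A} (hs : star s = -s) (z : A) :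
    s * z * s = s * (z * s) := by
  have h : associator s z s = 0 := by
    rw [associator_skew_left h6 hs, associator_self_right_of_skew h6 hs, neg_zero]
  exact sub_eq_zero.1 h

theorem IsConjInverse.mulLeft_mul_mulLeft (h6 : IsSMulRegular A (6 : ℕ)) {a b : A}
    (h : IsConjInverse a b) (ha : star a = -a) (hb : star b = -b) :
    mulLeft a * mulLeft b = -1 := by
  ext z
  rw [← mulLeft_mul_of_skew h6 ha (h.commute_mulLeft ha hb), h.mul_eq_neg_one ha hb]
  exact neg_one_mul z

theorem eq_one_of_isConjInverse_one_add (h6 : IsSMulRegular A (6 : ℕ)) {s v : A}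
    (hs : star s = -s) (hss : s * s = 1) (hv : IsConjInverse (1 + s) v) : s = 1 := by
  have h3 : IsSMulRegular A (3 : ℕ) := IsSMulRegular.of_mul (a := 2) h6
  have hsleft (z : A) : s * (s * z) = z := by rw [← mul_self_mul_of_skew h6 hs, hss, one_mul]
  have hsright (z : A) : z * s * s = z := by rw [mul_mul_self_of_skew h6 hs, hss, mul_one]
  have hflex := mul_mul_flexible_of_skew h6 hs
  have hself : 2 • ((1 - s) * (v * (1 - s))) = 1 - s := by
    have h := congrArg star (hv (1 + s))
    simp only [strTrip, star_add, star_neg, star_sub, star_mul, star_star, star_one, hs, mul_add,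
      add_mul, mul_sub, sub_mul, mul_one, one_mul, neg_mul, mul_neg, neg_neg, hss]
      at h ⊢
    linear_combination (norm := abel) h
  have hone : (2 • (1 - s) : A) = -(2 • ((1 - s) * (v * (1 - s)))) := by
    have h : (1 - s) * strTrip star (1 + s) v 1 * (1 - s) = (1 - s) * 1 * (1 - s) := by rw [hv 1]
    simp only [strTrip, star_add, star_one, hs, mul_add, add_mul, mul_sub, sub_mul, mul_one,
      one_mul, neg_mul, mul_neg, hss, hsleft, hsright, hflex] at h ⊢
    linear_combination (norm := abel) -h
  have hthree : 3 • (1 - s) = 0 := by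
    linear_combination (norm := abel) hone - hself
  exact (sub_eq_zero.1 (h3.right_eq_zero_of_smul hthree)).symm

theorem add_ne_zero_of_isConjInverse [Nontrivial A] (h6 : IsSMulRegular A (6 : ℕ))
    (hdiv : IsConjDivision (star : A → A)) {s ŝ : A} (hs : star s = -s) (hŝ : star ŝ = -ŝ)
    (h : IsConjInverse s ŝ) : s + ŝ ≠ 0 := by
  have h2 : IsSMulRegular A (2 : ℕ) := IsSMulRegular.of_mul (a := 3) h6
  intro hsum
  obtain rfl : ŝ = -s := (neg_eq_of_add_eq_zero_right hsum).symm
  have hss : s * s = 1 := by simpa only [mul_neg, neg_inj] using h.mul_eq_neg_one hs hŝ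
  have hself : IsSelfAdjoint s := by
    by_cases h0 : 1 + s = 0
    · rw [← neg_eq_of_add_eq_zero_right h0]
      exact (IsSelfAdjoint.one A).neg
    · obtain ⟨v, hv⟩ := hdiv _ h0
      rw [eq_one_of_isConjInverse_one_add h6 hs hss hv]
      exact IsSelfAdjoint.one A
  have hs0 : s = 0 := eq_zero_of_isSelfAdjoint_of_skew h2 hself hs
  rw [hs0, zero_mul] at hss
  exact zero_ne_one hss

theorem isConjInverse_one_sub_mul_self (h6 : IsSMulRegular A (6 : ℕ)) {s ŝ t : A}
    (hs : star s = -s) (hŝ : star ŝ = -ŝ) (ht : star t = -t) (h : IsConjInverse s ŝ)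
    (hst : Commute (mulLeft s) (mulLeft t)) (hŝt : Commute (mulLeft ŝ) (mulLeft t))
    (hadd : mulLeft (s + ŝ) * mulLeft t = -1) : IsConjInverse (1 - s * s) (-(ŝ * t)) := by
  have hx : mulLeft (1 - s * s) = 1 - mulLeft s * mulLeft s := by
    rw [map_sub, mulLeft_mul_of_skew h6 hs (Commute.refl _)]
    congr 1
    exact AddMonoidHom.ext one_mul
  have hu : mulLeft (-(ŝ * t)) = -(mulLeft ŝ * mulLeft t) := by
    rw [map_neg, mulLeft_mul_of_skew h6 hŝ hŝt]
  have hcomm : Commute (mulLeft (1 - s * s)) (mulLeft (-(ŝ * t))) := by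
    rw [hx, hu]
    have c := (h.commute_mulLeft hs hŝ).mul_right hst
    exact ((Commute.one_left _).sub_left (c.mul_left c)).neg_right
  have hmul : mulLeft (1 - s * s) * mulLeft (-(ŝ * t)) = 1 :=
    calc mulLeft (1 - s * s) * mulLeft (-(ŝ * t))
        = mulLeft s * (mulLeft s * mulLeft ŝ) * mulLeft t - mulLeft ŝ * mulLeft t := by
          rw [hx, hu]; noncomm_ring
      _ = -(mulLeft (s + ŝ) * mulLeft t) := by
          rw [h.mulLeft_mul_mulLeft h6 hs hŝ, map_add]; noncomm_ring
      _ = 1 := by rw [hadd, neg_neg]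
  exact isConjInverse_of_mulLeft_mul_mulLeft
    ((IsSelfAdjoint.one A).sub (isSelfAdjoint_mul_of_skew hs hs (Commute.refl s)))
    (isSelfAdjoint_mul_of_skew hŝ ht (commute_of_commute_mulLeft hŝt)).neg hmul
    (hcomm.eq ▸ hmul)

theorem stmt7_general (R : Type*) [Semiring R] [Invertible (2 : R)] [Invertible (3 : R)]
    [Module R A] [Nontrivial A] {s ŝ : A} (hs : star s = -s) (hŝ : star ŝ = -ŝ)
    (hinv : IsConjInverse s ŝ) :
    (IsConjDivision (star : A → A) → s + ŝ ≠ 0) ∧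
    ∀ t : A, star t = -t →
      (∀ z : A, t * ((s + ŝ) * z) = -z ∧ (s + ŝ) * (t * z) = -z) →
      ((∀ z : A, strTrip star 1 (-(ŝ * t)) z = z + s * (t * z)) ∧
        (s * (-(ŝ * t)) = -(⅟(3 : R) • strTrip star 1 (t * 1) 1) ∧ s * (-(ŝ * t)) = t) ∧
        strPsi star 1 (s * t) = 0 ∧
        IsConjInverse (1 - s * s) (-(ŝ * t))) := by
  have h6 := isSMulRegular_six R A
  refine ⟨fun hdiv => add_ne_zero_of_isConjInverse h6 hdiv hs hŝ hinv, fun t ht hz => ?_⟩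
  have hleft : mulLeft t * mulLeft (s + ŝ) = -1 := AddMonoidHom.ext fun z => (hz z).1
  have hright : mulLeft (s + ŝ) * mulLeft t = -1 := AddMonoidHom.ext fun z => (hz z).2
  obtain ⟨hst, hŝt⟩ := commute_mulLeft_of_mulLeft_add (hinv.commute_mulLeft hs hŝ) hleft hright
  have hu : IsSelfAdjoint (-(ŝ * t)) :=
    (isSelfAdjoint_mul_of_skew hŝ ht (commute_of_commute_mulLeft hŝt)).neg
  have hsu : s * (-(ŝ * t)) = t := by
    have h : s * (ŝ * t) = -t := DFunLike.congr_fun (hinv.mulLeft_mul_mulLeft h6 hs hŝ) t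
    rw [mul_neg, h, neg_neg]
  refine ⟨fun z => ?_, ⟨?_, hsu⟩, ?_, ?_⟩
  · have h : ŝ * t * z = ŝ * (t * z) := DFunLike.congr_fun (mulLeft_mul_of_skew h6 hŝ hŝt) z
    have hsum := (hz z).2
    rw [add_mul] at hsum
    rw [strTrip_one_of_isSelfAdjoint hu, neg_mul, h]
    linear_combination (norm := abel) -hsum
  · rw [hsu, mul_one, strTrip_one_skew_one ht, smul_neg, neg_neg, ← Nat.cast_smul_eq_nsmul R,
      Nat.cast_ofNat, invOf_smul_smul]
  · exact strPsi_one_of_isSelfAdjoint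
      (isSelfAdjoint_mul_of_skew hs ht (commute_of_commute_mulLeft hst))
  · exact isConjInverse_one_sub_mul_self h6 hs hŝ ht hinv hst hŝt hright

end StructurableRing

/-- Let `A` be a structurable division algebra over a field `k` with
`char k ≠ 2, 3`, and let `0 ≠ s` be skew with conjugate inverse `ŝ ∈ S`.  Then
`s + ŝ ≠ 0`.  Moreover, if `t ∈ S` is the conjugate inverse of `s + ŝ` (so
`t·((s+ŝ)·z) = (s+ŝ)·(t·z) = −z` for all `z`), then with `u := −(ŝ·t)`:
(1) `V_{1,u} = id + L_s L_t`;  (2) `s·u = −(1/3)·U_1(t·1)`, equivalently `s·u = t`;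
(3) `ψ(1, s·t) = 0`;  (4) `u` is the conjugate inverse of `1 − s·s`. -/
theorem stmt7 {k : Type*} [Field k] {A : Type*} [NonAssocRing A] [Module k A]
    [SMulCommClass k A A] [IsScalarTower k A A] [FiniteDimensional k A] [Nontrivial A]
    (h2 : (2 : k) ≠ 0) (h3 : (3 : k) ≠ 0)
    (bar : A → A) (hstr : IsStructurable k A bar) (hdiv : IsConjDivision bar)
    (s : A) (hs0 : s ≠ 0) (hsS : bar s = -s)
    (shat : A) (hshatS : bar shat = -shat)
    (hshat : ∀ z : A, strTrip bar s shat z = z) :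
    s + shat ≠ 0 ∧
    ∀ t : A, bar t = -t →
      (∀ z : A, t * ((s + shat) * z) = -z ∧ (s + shat) * (t * z) = -z) →
      ((∀ z : A, strTrip bar 1 (-(shat * t)) z = z + s * (t * z)) ∧
        (s * (-(shat * t)) = -((3 : k)⁻¹ • strTrip bar 1 (t * 1) 1) ∧
          s * (-(shat * t)) = t) ∧
        strPsi bar 1 (s * t) = 0 ∧
        (∀ z : A, strTrip bar (1 - s * s) (-(shat * t)) z = z)) := by
  let := hstr.toStarRing
  have := hstr.isStructurableRing
  let := invertibleOfNonzero h2
  let := invertibleOfNonzero h3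
  exact (stmt7_general k hsS hshatS hshat).imp_left fun h => h hdiv
end
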